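/- Let φ : M_p × M_b → M_c be a ℂ-bilinear map (i.e., the first factor of the domain is M_p). Then φ is (p,p,1)-positive if and only if its linearization D_φ : M_p ⊗ M_b ≅ M_{pb} → M_c, the linear map determined by D_φ(x ⊗ y) = φ(x,y), sends positive matrices to positive matrices. -/

import Mathlib

open Matrix Kronecker ComplexOrder

noncomputable section

abbrev Mat (n : ℕ) := Matrix (Fin n) (Fin n) ℂ

def blk {p a : ℕ} (x : Matrix (Fin p × Fin a) (Fin p × Fin a) ℂ) (i j : Fin p) :
    Mat a := Matrix.of fun s t => x (i, s) (j, t)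

def ampl {a b c p q : ℕ} (φ : Mat a →ₗ[ℂ] Mat b →ₗ[ℂ] Mat c)
    (x : Matrix (Fin p × Fin a) (Fin p × Fin a) ℂ)
    (y : Matrix (Fin q × Fin b) (Fin q × Fin b) ℂ) :
    Matrix ((Fin p × Fin q) × Fin c) ((Fin p × Fin q) × Fin c) ℂ :=
  Matrix.of fun u v => φ (blk x u.1.1 v.1.1) (blk y u.1.2 v.1.2) u.2 v.2

def compress {c p q r : ℕ} (α : Matrix (Fin r) (Fin p × Fin q) ℂ)
    (X : Matrix ((Fin p × Fin q) × Fin c) ((Fin p × Fin q) × Fin c) ℂ) :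
    Matrix (Fin r × Fin c) (Fin r × Fin c) ℂ :=
  Matrix.of fun u v => ∑ ik, ∑ jl, α u.1 ik * (starRingEnd ℂ) (α v.1 jl) * X (ik, u.2) (jl, v.2)

def IsPQRPos {a b c : ℕ} (φ : Mat a →ₗ[ℂ] Mat b →ₗ[ℂ] Mat c) (p q r : ℕ) : Prop :=
  ∀ (x : Matrix (Fin p × Fin a) (Fin p × Fin a) ℂ), x.PosSemidef →
  ∀ (y : Matrix (Fin q × Fin b) (Fin q × Fin b) ℂ), y.PosSemidef →
  ∀ (α : Matrix (Fin r) (Fin p × Fin q) ℂ), (compress α (ampl φ x y)).PosSemidef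

def WW {p b : ℕ} (α : Matrix (Fin 1) (Fin p × Fin p) ℂ)
    (x : Matrix (Fin p × Fin p) (Fin p × Fin p) ℂ)
    (y : Matrix (Fin p × Fin b) (Fin p × Fin b) ℂ) :
    Matrix (Fin p × Fin b) (Fin p × Fin b) ℂ :=
  ∑ ik : Fin p × Fin p, ∑ jl : Fin p × Fin p,
    (α 0 ik * (starRingEnd ℂ) (α 0 jl)) • (blk x ik.1 jl.1 ⊗ₖ blk y ik.2 jl.2)

def AA {p b : ℕ} (α : Matrix (Fin 1) (Fin p × Fin p) ℂ) :
    Matrix (Fin p × Fin b) ((Fin p × Fin p) × (Fin p × Fin b)) ℂ :=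
  Matrix.of fun u w => if u.1 = w.1.2 then (if u.2 = w.2.2 then α 0 (w.1.1, w.2.1) else 0) else 0

lemma WW_eq {p b : ℕ} (α : Matrix (Fin 1) (Fin p × Fin p) ℂ)
    (x : Matrix (Fin p × Fin p) (Fin p × Fin p) ℂ)
    (y : Matrix (Fin p × Fin b) (Fin p × Fin b) ℂ) :
    WW α x y = AA (b := b) α * (x ⊗ₖ y) * (AA (b := b) α)ᴴ := by
  ext u v
  simp only [WW, AA, blk, Matrix.sum_apply, Matrix.smul_apply, Matrix.mul_apply,
    Matrix.conjTranspose_apply, Matrix.of_apply, Matrix.kroneckerMap_apply,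
    Fintype.sum_prod_type, apply_ite star, star_zero, ite_mul, zero_mul, mul_ite, mul_zero,
    Finset.sum_ite_eq, Finset.mem_univ, if_true, Finset.sum_ite_irrel, Finset.sum_const_zero,
    smul_eq_mul, Finset.sum_mul]
  have h4 : ∀ f : Fin p → Fin p → Fin p → Fin p → ℂ,
      ∑ i, ∑ k, ∑ j, ∑ l, f i k j l = ∑ j, ∑ l, ∑ i, ∑ k, f i k j l := by
    intro f
    have h := Finset.sum_comm (s := Finset.univ) (t := Finset.univ)
      (f := fun (a : Fin p × Fin p) (c : Fin p × Fin p) => f a.1 a.2 c.1 c.2)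
    simpa only [Fintype.sum_prod_type] using h
  rw [h4]
  refine Finset.sum_congr rfl fun i _ => Finset.sum_congr rfl fun k _ =>
    Finset.sum_congr rfl fun j _ => Finset.sum_congr rfl fun l _ => ?_
  simp only [starRingEnd_apply]
  ring

lemma compress_eq {p b c : ℕ} (φ : Mat p →ₗ[ℂ] Mat b →ₗ[ℂ] Mat c)
    (D : Matrix (Fin p × Fin b) (Fin p × Fin b) ℂ →ₗ[ℂ] Mat c)
    (hD : ∀ (x : Mat p) (y : Mat b), D (x ⊗ₖ y) = φ x y)
    (α : Matrix (Fin 1) (Fin p × Fin p) ℂ)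
    (x : Matrix (Fin p × Fin p) (Fin p × Fin p) ℂ)
    (y : Matrix (Fin p × Fin b) (Fin p × Fin b) ℂ) :
    compress α (ampl φ x y) = (D (WW α x y)).submatrix Prod.snd Prod.snd := by
  ext ⟨u, s⟩ ⟨v, t⟩
  rw [Subsingleton.elim u 0, Subsingleton.elim v 0]
  simp [compress, ampl, WW, map_sum, hD, Matrix.sum_apply]

lemma WW_id {p b : ℕ} (z : Matrix (Fin p × Fin b) (Fin p × Fin b) ℂ) :
    WW (Matrix.of fun _ ik => if ik.1 = ik.2 then 1 else 0)
      (Matrix.vecMulVec (fun i : Fin p × Fin p => if i.1 = i.2 then (1 : ℂ) else 0)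
        (star fun i : Fin p × Fin p => if i.1 = i.2 then (1 : ℂ) else 0)) z = z := by
  ext ⟨a, s⟩ ⟨d, t⟩
  simp only [WW, blk, Matrix.sum_apply, Matrix.smul_apply, Matrix.kroneckerMap_apply, Matrix.of_apply]
  simp [WW, blk, Matrix.sum_apply, Fintype.sum_prod_type, Matrix.vecMulVec_apply,
    Matrix.kroneckerMap_apply, apply_ite star]

/-- Proposition "1pp" (iv): for φ : M_p × M_b → M_c, φ is (p,p,1)-positive iff its
linearization D : M_p ⊗ M_b ≅ M_{pb} → M_c (determined by D(x ⊗ y) = φ(x,y)) is a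
positive map. -/
theorem stmt4 {p b c : ℕ} (φ : Mat p →ₗ[ℂ] Mat b →ₗ[ℂ] Mat c)
    (D : Matrix (Fin p × Fin b) (Fin p × Fin b) ℂ →ₗ[ℂ] Mat c)
    (hD : ∀ (x : Mat p) (y : Mat b), D (x ⊗ₖ y) = φ x y) :
    IsPQRPos φ p p 1 ↔
      ∀ (z : Matrix (Fin p × Fin b) (Fin p × Fin b) ℂ), z.PosSemidef →
        (D z).PosSemidef := by
  constructor
  · intro h z hz
    have h1 := h _ (Matrix.posSemidef_vecMulVec_self_star
      (fun i : Fin p × Fin p => if i.1 = i.2 then (1 : ℂ) else 0)) z hz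
      (Matrix.of fun _ ik => if ik.1 = ik.2 then 1 else 0)
    rw [compress_eq φ D hD, WW_id] at h1
    exact h1.submatrix (fun s => ((0 : Fin 1), s))
  · intro h x hx y hy α
    rw [compress_eq φ D hD]
    apply Matrix.PosSemidef.submatrix
    apply h
    rw [WW_eq]
    exact (hx.kronecker hy).mul_mul_conjTranspose_same _
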